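/- (N-independence of the equatorial-ensemble performance operator.) For an integer N ≥ 3 and k ∈ {0, 1, …, N−1}, let |φ_k⟩ := (|0⟩ + e^{2πik/N}|1⟩)/√2 ∈ ℂ². Then (1/N) Σ_{k=0}^{N−1} |φ_k⟩⟨φ_k| ⊗ |φ_k⟩⟨φ_k| = (1/4)(|0⟩⟨0|⊗|0⟩⟨0| + |1⟩⟨1|⊗|1⟩⟨1| + 2|Ψ⁺⟩⟨Ψ⁺|), where |Ψ⁺⟩ := (|0⟩⊗|1⟩ + |1⟩⊗|0⟩)/√2. In particular, the performance operator of the fidelity test for N equally spaced equatorial qubit states is the same for every N ≥ 3; also the marginal (1/N) Σ_k |φ_k⟩⟨φ_k| equals I₂/2. -/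

import Mathlib

open Matrix Kronecker BigOperators ComplexOrder Real

noncomputable section

/-- Rank-one projector `|v⟩⟨v|` onto a vector. -/
def outer {ι : Type*} (v : ι → ℂ) : Matrix ι ι ℂ :=
  Matrix.vecMulVec v (star v)

/-- The equatorial qubit state `|φ_k⟩ = (|0⟩ + e^{2πik/N}|1⟩)/√2`. -/
def eqState (N : ℕ) (k : Fin N) : Fin 2 → ℂ :=
  ![((Real.sqrt 2 : ℂ))⁻¹,
    Complex.exp (2 * Real.pi * Complex.I * (k : ℕ) / N) * ((Real.sqrt 2 : ℂ))⁻¹]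

/-- The two-qubit vector `|Ψ⁺⟩ = (|01⟩ + |10⟩)/√2`. -/
def psiPlus : Fin 2 × Fin 2 → ℂ :=
  fun p => if p.1 ≠ p.2 then ((Real.sqrt 2 : ℂ))⁻¹ else 0

/-- The standard basis vectors of `ℂ²`. -/
def e0 : Fin 2 → ℂ := ![1, 0]
def e1 : Fin 2 → ℂ := ![0, 1]

/-!
Put `ζ = e^{2πi/N}`. Then `φ_k ⊗ φ_k = ½ |00⟩ + ζ^k (1/√2) |Ψ⁺⟩ + ζ^{2k} ½ |11⟩`. Averaging
over `k` kills every cross term between components carrying distinct phases, because the characters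
`k ↦ ζ^{ks}`, `0 ≤ s < N`, are orthonormal; three phases occur, so `N ≥ 3` suffices and only the sum
of the projectors onto the components survives, which does not involve `N`. The marginal is the same
computation with the two components of `φ_k`.
-/

/-- The product vector `v ⊗ w`, indexed by pairs so that its projector `|v ⊗ w⟩⟨v ⊗ w|` has
the index type of the Kronecker product of the projectors onto `v` and `w`. -/
def tensorVec {ι κ : Type*} (v : ι → ℂ) (w : κ → ℂ) : ι × κ → ℂ :=
  fun p => v p.1 * w p.2

section Outer

variable {ι κ : Type*}

theorem outer_apply (v : ι → ℂ) (i j : ι) : outer v i j = v i * star (v j) :=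
  rfl

theorem outer_smul (c : ℂ) (v : ι → ℂ) : outer (c • v) = (c * star c) • outer v := by
  simp only [outer, star_smul, smul_vecMulVec, vecMulVec_smul, smul_smul, mul_comm]

theorem outer_tensorVec (v : ι → ℂ) (w : κ → ℂ) :
    outer (tensorVec v w) = outer v ⊗ₖ outer w := by
  ext p q
  simp only [outer_apply, tensorVec, kroneckerMap_apply, star_mul']
  ring

end Outer

section PhaseAverage

variable {N d : ℕ} {ζ : ℂ}

theorem average_pow_mul_star_pow (hζ : IsPrimitiveRoot ζ N) {s t : ℕ} (hs : s < N) (ht : t < N) :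
    (N : ℂ)⁻¹ * ∑ k : Fin N, ζ ^ (k * s : ℕ) * star (ζ ^ (k * t : ℕ)) = if s = t then 1 else 0 := by
  have hN : N ≠ 0 := by lia
  have star_ζ : star ζ = ζ⁻¹ := (Complex.inv_eq_conj (hζ.norm'_eq_one hN)).symm
  have hζ₀ : ζ ≠ 0 := hζ.ne_zero hN
  have ratio_pow (k : ℕ) : ζ ^ (k * s) * star (ζ ^ (k * t)) = (ζ ^ s / ζ ^ t) ^ k := by
    rw [star_pow, star_ζ, inv_pow, ← div_eq_mul_inv, div_pow, ← pow_mul', ← pow_mul']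
  simp only [ratio_pow, Fin.sum_univ_eq_sum_range (fun k => (ζ ^ s / ζ ^ t) ^ k)]
  split_ifs with hst
  · simp [hst, hζ₀, hN]
  · have ratio_ne_one : ζ ^ s / ζ ^ t ≠ 1 := fun h =>
      hst (hζ.pow_inj hs ht (eq_of_div_eq_one h))
    have ratio_pow_N : (ζ ^ s / ζ ^ t) ^ N = 1 := by
      simp only [div_pow, pow_right_comm, hζ.pow_eq_one, one_pow, div_one]
    rw [geom_sum_eq ratio_ne_one, ratio_pow_N, sub_self, zero_div, mul_zero]

theorem average_sum_pow_mul_star_sum_pow (hζ : IsPrimitiveRoot ζ N) (hd : d ≤ N)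
    (a b : Fin d → ℂ) :
    (N : ℂ)⁻¹ * ∑ k : Fin N, (∑ s : Fin d, ζ ^ (k * s : ℕ) * a s) *
      star (∑ t : Fin d, ζ ^ (k * t : ℕ) * b t) = ∑ s, a s * star (b s) := by
  calc
    _ = ∑ s : Fin d, ∑ t : Fin d, a s * star (b t) *
          ((N : ℂ)⁻¹ * ∑ k : Fin N, ζ ^ (k * s : ℕ) * star (ζ ^ (k * t : ℕ))) := by
      simp only [star_sum, star_mul', Fintype.sum_mul_sum]
      simp only [Finset.mul_sum]
      rw [← Finset.sum_comm_cycle]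
      refine Fintype.sum_congr _ _ fun s => Fintype.sum_congr _ _ fun t =>
        Fintype.sum_congr _ _ fun k => ?_
      ring
    _ = ∑ s, a s * star (b s) := by
      simp only [average_pow_mul_star_pow hζ (Fin.is_lt _ |>.trans_le hd)
        (Fin.is_lt _ |>.trans_le hd), Fin.val_inj, mul_ite, mul_one, mul_zero,
        Finset.sum_ite_eq, Finset.mem_univ, if_true]

theorem average_outer_sum_pow_smul (hζ : IsPrimitiveRoot ζ N) (hd : d ≤ N) {ι : Type*}
    (ψ : Fin d → ι → ℂ) :
    (N : ℂ)⁻¹ • ∑ k : Fin N, outer (∑ s : Fin d, ζ ^ (k * s : ℕ) • ψ s) = ∑ s, outer (ψ s) := by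
  ext i j
  simpa only [Matrix.smul_apply, Matrix.sum_apply, outer_apply, Finset.sum_apply, Pi.smul_apply,
    smul_eq_mul] using average_sum_pow_mul_star_sum_pow hζ hd (ψ · i) (ψ · j)

end PhaseAverage

section Equatorial

theorem inv_sqrt_two_mul_self : (Real.sqrt 2 : ℂ)⁻¹ * (Real.sqrt 2 : ℂ)⁻¹ = 2⁻¹ := by
  rw [← mul_inv, ← Complex.ofReal_mul, Real.mul_self_sqrt zero_le_two, Complex.ofReal_ofNat]

theorem outer_inv_sqrt_two_smul {ι : Type*} (v : ι → ℂ) :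
    outer ((Real.sqrt 2 : ℂ)⁻¹ • v) = (2 : ℂ)⁻¹ • outer v := by
  rw [outer_smul, star_inv₀, Complex.star_def, Complex.conj_ofReal, inv_sqrt_two_mul_self]

theorem outer_e0_add_outer_e1 : outer e0 + outer e1 = 1 := by
  ext i j
  fin_cases i <;> fin_cases j <;> simp [outer_apply, e0, e1]

theorem eqState_eq_sum_pow_smul (N : ℕ) (k : Fin N) :
    eqState N k = ∑ s : Fin 2, Complex.exp (2 * π * Complex.I / N) ^ (k * s : ℕ) •
      ![(Real.sqrt 2 : ℂ)⁻¹ • e0, (Real.sqrt 2 : ℂ)⁻¹ • e1] s := by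
  have exp_pow : Complex.exp (2 * π * Complex.I * (k : ℕ) / N) =
      Complex.exp (2 * π * Complex.I / N) ^ (k : ℕ) := by
    rw [← Complex.exp_nat_mul]
    ring_nf
  ext i
  fin_cases i <;> simp [eqState, e0, e1, exp_pow]

theorem tensorVec_eqState_self (N : ℕ) (k : Fin N) :
    tensorVec (eqState N k) (eqState N k) =
      ∑ s : Fin 3, Complex.exp (2 * π * Complex.I / N) ^ (k * s : ℕ) •
        ![(2 : ℂ)⁻¹ • tensorVec e0 e0, (Real.sqrt 2 : ℂ)⁻¹ • psiPlus,
          (2 : ℂ)⁻¹ • tensorVec e1 e1] s := by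
  ext ⟨i, j⟩
  simp only [tensorVec, eqState_eq_sum_pow_smul, Fin.sum_univ_two, Fin.sum_univ_three]
  fin_cases i <;> fin_cases j <;> simp [tensorVec, psiPlus, e0, e1, ← inv_sqrt_two_mul_self] <;>
    ring

theorem average_outer_eqState {N : ℕ} (hN : 2 ≤ N) :
    (N : ℂ)⁻¹ • ∑ k : Fin N, outer (eqState N k) =
      (2 : ℂ)⁻¹ • (1 : Matrix (Fin 2) (Fin 2) ℂ) := by
  have hζ := Complex.isPrimitiveRoot_exp N (by lia)
  simp only [eqState_eq_sum_pow_smul]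
  rw [average_outer_sum_pow_smul hζ hN, Fin.sum_univ_two]
  simp only [cons_val, outer_inv_sqrt_two_smul]
  rw [← smul_add, outer_e0_add_outer_e1]

theorem average_outer_eqState_kronecker_self {N : ℕ} (hN : 3 ≤ N) :
    (N : ℂ)⁻¹ • ∑ k : Fin N, outer (eqState N k) ⊗ₖ outer (eqState N k) =
      (4 : ℂ)⁻¹ • (outer e0 ⊗ₖ outer e0 + outer e1 ⊗ₖ outer e1 + (2 : ℂ) • outer psiPlus) := by
  have hζ := Complex.isPrimitiveRoot_exp N (by lia)
  simp only [← outer_tensorVec, tensorVec_eqState_self]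
  rw [average_outer_sum_pow_smul hζ hN, Fin.sum_univ_three]
  simp only [cons_val, outer_inv_sqrt_two_smul, outer_smul (2 : ℂ)⁻¹, star_inv₀, star_ofNat]
  module

end Equatorial

/-- N-independence of the equatorial-ensemble performance operator:
for every `N ≥ 3`,
`(1/N) Σ_k |φ_k⟩⟨φ_k| ⊗ |φ_k⟩⟨φ_k| = (1/4)(|0⟩⟨0|⊗|0⟩⟨0| + |1⟩⟨1|⊗|1⟩⟨1| + 2|Ψ⁺⟩⟨Ψ⁺|)`,
and the marginal `(1/N) Σ_k |φ_k⟩⟨φ_k|` equals `I/2`. -/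
theorem equatorial_performance_operator (N : ℕ) (hN : 3 ≤ N) :
    ((N : ℂ))⁻¹ • (∑ k : Fin N, outer (eqState N k) ⊗ₖ outer (eqState N k)) =
      ((4 : ℂ))⁻¹ • (outer e0 ⊗ₖ outer e0 + outer e1 ⊗ₖ outer e1 +
        (2 : ℂ) • outer psiPlus) ∧
    ((N : ℂ))⁻¹ • (∑ k : Fin N, outer (eqState N k)) =
      ((2 : ℂ))⁻¹ • (1 : Matrix (Fin 2) (Fin 2) ℂ) :=
  ⟨average_outer_eqState_kronecker_self hN, average_outer_eqState (by lia)⟩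

end
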